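/- arXiv:1505.00081 — 8 statements merged into one kernel-verified Lean document; each statement's English description precedes it below -/
import Mathlib

section
/- Let C > 0, let l = √2/2, and let k = ⌈2C/l + 1⌉. Suppose u, v ∈ ℝ² lie in grid cells cell(i,j) and cell(i',j') respectively, where i ≡ i' (mod k), j ≡ j' (mod k), and (i,j) ≠ (i',j'). Then the Euclidean distance between u and v is strictly greater than 2C. -/
/-- The half-open grid cell `[i·l, (i+1)·l) × [j·l, (j+1)·l)` in the Euclidean plane. -/
def cell (l : ℝ) (i j : ℤ) : Set (EuclideanSpace ℝ (Fin 2)) :=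
  {p | (i : ℝ) * l ≤ p 0 ∧ p 0 < ((i : ℝ) + 1) * l ∧
       (j : ℝ) * l ≤ p 1 ∧ p 1 < ((j : ℝ) + 1) * l}

theorem coord_aux (C l : ℝ) (hl : 0 < l) (k : ℤ) (hk : k = ⌈2 * C / l + 1⌉)
    (i i' : ℤ) (hi : i ≡ i' [ZMOD k]) (hne : i ≠ i') (x y : ℝ)
    (hx : (i : ℝ) * l ≤ x) (hx2 : x < ((i : ℝ) + 1) * l)
    (hy : (i' : ℝ) * l ≤ y) (hy2 : y < ((i' : ℝ) + 1) * l) : 2 * C < |x - y| := by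
  have h1 : 2 * C / l + 1 ≤ (k : ℝ) := by rw [hk]; exact Int.le_ceil _
  have h2 : 2 * C ≤ ((k : ℝ) - 1) * l := by
    rw [← div_le_iff₀ hl]; linarith
  have h3 : k ≤ |i' - i| :=
    Int.le_of_dvd (abs_pos.mpr (sub_ne_zero.mpr hne.symm)) ((dvd_abs _ _).mpr hi.dvd)
  rcases le_abs.mp h3 with h | h
  · have h' : (k : ℝ) ≤ i' - i := by exact_mod_cast h
    have := mul_le_mul_of_nonneg_right h' hl.le
    rw [lt_abs]; right; linarith
  · have h' : (k : ℝ) ≤ -(i' - i) := by exact_mod_cast h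
    have := mul_le_mul_of_nonneg_right h' hl.le
    rw [lt_abs]; left; linarith

theorem dist_aux (u v : EuclideanSpace ℝ (Fin 2)) (a : Fin 2) : |u a - v a| ≤ dist u v := by
  have := PiLp.norm_apply_le (u - v) a
  rw [dist_eq_norm]
  simpa using this

theorem stmt_0 (C : ℝ) (hC : 0 < C) (l : ℝ) (hl : l = Real.sqrt 2 / 2)
    (k : ℤ) (hk : k = ⌈2 * C / l + 1⌉)
    (i j i' j' : ℤ) (hi : i ≡ i' [ZMOD k]) (hj : j ≡ j' [ZMOD k])
    (hne : (i, j) ≠ (i', j'))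
    (u v : EuclideanSpace ℝ (Fin 2))
    (hu : u ∈ cell l i j) (hv : v ∈ cell l i' j') :
    dist u v > 2 * C := by
  have hl0 : 0 < l := by rw [hl]; positivity
  obtain ⟨a1, a2, a3, a4⟩ := hu
  obtain ⟨b1, b2, b3, b4⟩ := hv
  by_cases h : i = i'
  · have h' : j ≠ j' := fun e => hne (by rw [h, e])
    exact lt_of_lt_of_le (coord_aux C l hl0 k hk j j' hj h' _ _ a3 a4 b3 b4) (dist_aux u v 1)
  · exact lt_of_lt_of_le (coord_aux C l hl0 k hk i i' hi h _ _ a1 a2 b1 b2) (dist_aux u v 0)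
end

section
/- Let C > 0, l = √2/2, and k = ⌈2C/l + 1⌉. Let cell(i,j) and cell(i',j') be two distinct grid cells in the same cell group (i.e., i ≡ i' (mod k), j ≡ j' (mod k), (i,j) ≠ (i',j')). Let S₁ be a finite set of points contained in cell(i,j) and S₂ a finite set of points contained in cell(i',j'), and let P be a finite set of points in ℝ² (the targets). Then no target p ∈ P satisfies both dist(p,u) ≤ C for some u ∈ S₁ and dist(p,v) ≤ C for some v ∈ S₂; consequently, the number of targets within distance C of some point of S₁ ∪ S₂ equals the number of targets within distance C of some point of S₁ plus the number of targets within distance C of some point of S₂. -/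
open scoped Classical

theorem aux_sep (C : ℝ) (l : ℝ) (hl : 0 < l) (k : ℤ) (hk : 2 * C ≤ ((k : ℝ) - 1) * l)
    (hk0 : 0 < k) (a b : ℤ) (hab : a ≡ b [ZMOD k]) (hne : a ≠ b) (x y : ℝ)
    (hx : (a : ℝ) * l ≤ x) (hx' : x < ((a : ℝ) + 1) * l)
    (hy : (b : ℝ) * l ≤ y) (hy' : y < ((b : ℝ) + 1) * l) : 2 * C < |x - y| := by
  have hd : k ∣ b - a := hab.dvd
  rcases lt_or_gt_of_ne hne with h | h
  · have h1 : k ≤ b - a := Int.le_of_dvd (by omega) hd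
    have h2 : (k : ℝ) ≤ b - a := by exact_mod_cast h1
    have h3 : (k : ℝ) * l ≤ (b - a) * l := by gcongr
    have := neg_abs_le (x - y)
    nlinarith
  · have h1 : k ≤ a - b := Int.le_of_dvd (by omega) (by rw [← neg_sub]; exact hd.neg_right)
    have h2 : (k : ℝ) ≤ a - b := by exact_mod_cast h1
    have h3 : (k : ℝ) * l ≤ (a - b) * l := by gcongr
    have := le_abs_self (x - y)
    nlinarith

theorem aux_coord (u v : EuclideanSpace ℝ (Fin 2)) (n : Fin 2) : |u n - v n| ≤ dist u v := by
  rw [dist_eq_norm]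
  simpa using PiLp.norm_apply_le (u - v) n

theorem stmt_1 (C : ℝ) (hC : 0 < C) (l : ℝ) (hl : l = Real.sqrt 2 / 2)
    (k : ℤ) (hk : k = ⌈2 * C / l + 1⌉)
    (i j i' j' : ℤ) (hi : i ≡ i' [ZMOD k]) (hj : j ≡ j' [ZMOD k])
    (hne : (i, j) ≠ (i', j'))
    (S₁ S₂ P : Finset (EuclideanSpace ℝ (Fin 2)))
    (hS₁ : ∀ u ∈ S₁, u ∈ cell l i j) (hS₂ : ∀ v ∈ S₂, v ∈ cell l i' j') :
    (¬ ∃ p ∈ P, (∃ u ∈ S₁, dist p u ≤ C) ∧ (∃ v ∈ S₂, dist p v ≤ C)) ∧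
    (P.filter (fun p => ∃ w ∈ S₁ ∪ S₂, dist p w ≤ C)).card =
      (P.filter (fun p => ∃ u ∈ S₁, dist p u ≤ C)).card +
      (P.filter (fun p => ∃ v ∈ S₂, dist p v ≤ C)).card := by
  have hl0 : 0 < l := by rw [hl]; positivity
  have hk1 : 2 * C / l + 1 ≤ (k : ℝ) := by rw [hk]; exact Int.le_ceil _
  have hk2 : 2 * C ≤ ((k : ℝ) - 1) * l := by
    rw [← div_le_iff₀ hl0]; linarith
  have hk0 : 0 < k := by
    have : (0 : ℝ) < k := lt_of_lt_of_le (by positivity) hk1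
    exact_mod_cast this
  have key : ∀ p, ¬ ((∃ u ∈ S₁, dist p u ≤ C) ∧ (∃ v ∈ S₂, dist p v ≤ C)) := by
    rintro p ⟨⟨u, hu, hpu⟩, v, hv, hpv⟩
    have huv : dist u v ≤ 2 * C := by
      have := dist_triangle_left u v p
      linarith
    obtain ⟨a1, a2, a3, a4⟩ := hS₁ u hu
    obtain ⟨b1, b2, b3, b4⟩ := hS₂ v hv
    by_cases h : i = i'
    · have h' : j ≠ j' := fun h' => hne (by rw [h, h'])
      have := aux_sep C l hl0 k hk2 hk0 j j' hj h' _ _ a3 a4 b3 b4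
      linarith [aux_coord u v 1]
    · have := aux_sep C l hl0 k hk2 hk0 i i' hi h _ _ a1 a2 b1 b2
      linarith [aux_coord u v 0]
  refine ⟨fun ⟨p, _, h⟩ => key p h, ?_⟩
  rw [← Finset.card_union_of_disjoint]
  · congr 1
    ext p
    simp only [Finset.mem_filter, Finset.mem_union]
    grind
  · rw [Finset.disjoint_left]
    intro p h1 h2
    exact key p ⟨(Finset.mem_filter.1 h1).2, (Finset.mem_filter.1 h2).2⟩
end

section
/- Let U be a finite set, ι a finite index set, and f : ι → Finset U. Let g : ℕ → ι be a greedy sequence, i.e., for every t, the element g(t) maximizes the number of newly covered elements: |f(g t) \ ⋃_{s<t} f(g s)| ≥ |f(v) \ ⋃_{s<t} f(g s)| for every v ∈ ι. Then for every positive integer B and every S ⊆ ι with |S| ≤ B, the coverage of the first B greedy picks satisfies |⋃_{t<B} f(g t)| ≥ (1 − 1/e) · |⋃_{v∈S} f v|. -/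
theorem stmt_2 {U ι : Type*} [Fintype U] [DecidableEq U] [Fintype ι]
    (f : ι → Finset U) (g : ℕ → ι)
    (hgreedy : ∀ t : ℕ, ∀ v : ι,
      ((f v) \ (Finset.range t).biUnion (fun s => f (g s))).card ≤
      ((f (g t)) \ (Finset.range t).biUnion (fun s => f (g s))).card)
    (B : ℕ) (hB : 0 < B) (S : Finset ι) (hS : S.card ≤ B) :
    (((Finset.range B).biUnion (fun t => f (g t))).card : ℝ) ≥
      (1 - 1 / Real.exp 1) * ((S.biUnion f).card : ℝ) := by
  set C : ℕ → Finset U := fun t => (Finset.range t).biUnion (fun s => f (g s)) with hC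
  have hstep : ∀ t, (C (t+1)).card = (C t).card + (f (g t) \ C t).card := by
    intro t
    have h1 : C (t+1) = f (g t) ∪ C t := by
      simp only [hC]
      rw [Finset.range_add_one, Finset.biUnion_insert]
    rw [h1, ← Finset.sdiff_union_self_eq_union,
      Finset.card_union_of_disjoint Finset.sdiff_disjoint, add_comm]
  have hopt : ∀ t, (S.biUnion f).card ≤ (C t).card + B * (f (g t) \ C t).card := by
    intro t
    have h1 : S.biUnion f ⊆ C t ∪ S.biUnion (fun v => f v \ C t) := by
      intro x hx
      simp only [Finset.mem_biUnion, Finset.mem_union, Finset.mem_sdiff] at hx ⊢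
      by_cases h : x ∈ C t
      · exact Or.inl h
      · obtain ⟨v, hv, hx⟩ := hx
        exact Or.inr ⟨v, hv, hx, h⟩
    calc (S.biUnion f).card ≤ _ := Finset.card_le_card h1
      _ ≤ (C t).card + (S.biUnion (fun v => f v \ C t)).card := Finset.card_union_le _ _
      _ ≤ (C t).card + S.card * (f (g t) \ C t).card := by
        gcongr
        exact Finset.card_biUnion_le_card_mul _ _ _ (fun v _ => hgreedy t v)
      _ ≤ _ := by gcongr
  have hBr : (1:ℝ) ≤ B := by exact_mod_cast hB
  have hBi : (0:ℝ) ≤ 1 - 1 / B := by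
    rw [sub_nonneg, div_le_one (by linarith)]; exact hBr
  have key : ∀ t, ((S.biUnion f).card : ℝ) - (C t).card
      ≤ (1 - 1 / (B:ℝ)) ^ t * (S.biUnion f).card := by
    intro t
    induction t with
    | zero => simp [hC]
    | succ t ih =>
      have h1 : ((C (t+1)).card : ℝ) = (C t).card + (f (g t) \ C t).card := by
        exact_mod_cast hstep t
      have h2 : ((S.biUnion f).card : ℝ) ≤ (C t).card + B * (f (g t) \ C t).card := by
        exact_mod_cast hopt t
      have h3 : (((S.biUnion f).card : ℝ) - (C t).card) / B ≤ (f (g t) \ C t).card := by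
        rw [div_le_iff₀ (by linarith)]; linarith
      have h4 := mul_le_mul_of_nonneg_left ih hBi
      have h5 : (1 - 1 / (B:ℝ)) * (((S.biUnion f).card : ℝ) - (C t).card)
        = (((S.biUnion f).card : ℝ) - (C t).card)
          - (((S.biUnion f).card : ℝ) - (C t).card) / B := by ring
      rw [pow_succ', mul_assoc, h1]
      linarith
  have hexp : (1 - 1 / (B:ℝ)) ^ B ≤ 1 / Real.exp 1 := by
    rw [one_div (Real.exp 1), ← Real.exp_neg]
    exact Real.one_sub_div_pow_le_exp_neg hBr
  have h6 := mul_le_mul_of_nonneg_right hexp (Nat.cast_nonneg (α := ℝ) (S.biUnion f).card)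
  have h7 := key B
  change ((C B).card : ℝ) ≥ _
  linarith
end

section
/- Let U be a finite set, ι a finite index set, and f : ι → Finset U. Let g : ℕ → ι be a greedy sequence, i.e., for every t, |f(g t) \ ⋃_{s<t} f(g s)| ≥ |f(v) \ ⋃_{s<t} f(g s)| for every v ∈ ι. Let B be a positive integer and let OPT_B = max over S ⊆ ι with |S| ≤ B of |⋃_{v∈S} f v|. Then for every t ≥ 0, the coverage of the first t greedy picks satisfies |⋃_{s<t} f(g s)| ≥ (1 − (1 − 1/B)^t) · OPT_B. -/
theorem stmt_3 {U ι : Type*} [Fintype U] [DecidableEq U] [Fintype ι] [DecidableEq ι]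
    (f : ι → Finset U) (g : ℕ → ι)
    (hgreedy : ∀ t : ℕ, ∀ v : ι,
      ((f v) \ (Finset.range t).biUnion (fun s => f (g s))).card ≤
      ((f (g t)) \ (Finset.range t).biUnion (fun s => f (g s))).card)
    (B : ℕ) (hB : 0 < B) (OPT : ℕ)
    (hOPT : OPT = ((Finset.univ : Finset ι).powerset.filter (fun S => S.card ≤ B)).sup
      (fun S => (S.biUnion f).card))
    (t : ℕ) :
    (((Finset.range t).biUnion (fun s => f (g s))).card : ℝ) ≥
      (1 - (1 - 1 / (B : ℝ)) ^ t) * (OPT : ℝ) := by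
  have key : ∀ t : ℕ, OPT ≤ ((Finset.range t).biUnion (fun s => f (g s))).card +
      B * ((f (g t)) \ (Finset.range t).biUnion (fun s => f (g s))).card := by
    intro t
    rw [hOPT]
    apply Finset.sup_le
    intro S hS
    have hS' : S.card ≤ B := (Finset.mem_filter.mp hS).2
    set C := (Finset.range t).biUnion (fun s => f (g s)) with hC
    have h1 : S.biUnion f ⊆ C ∪ S.biUnion (fun v => f v \ C) := by
      intro x hx
      obtain ⟨v, hv, hxv⟩ := Finset.mem_biUnion.mp hx
      by_cases hxC : x ∈ C
      · exact Finset.mem_union_left _ hxC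
      · exact Finset.mem_union_right _
          (Finset.mem_biUnion.mpr ⟨v, hv, Finset.mem_sdiff.mpr ⟨hxv, hxC⟩⟩)
    have h2 := Finset.card_le_card h1
    have h3 := Finset.card_union_le C (S.biUnion (fun v => f v \ C))
    have h4 : (S.biUnion (fun v => f v \ C)).card ≤ S.card * (f (g t) \ C).card :=
      Finset.card_biUnion_le_card_mul _ _ _ (fun v _ => hgreedy t v)
    have h5 := Nat.mul_le_mul_right (f (g t) \ C).card hS'
    show (S.biUnion f).card ≤ _
    omega
  induction t with
  | zero => simp
  | succ t ih =>
    have hk := key t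
    have hc : ((Finset.range (t+1)).biUnion (fun s => f (g s))).card =
        ((Finset.range t).biUnion (fun s => f (g s))).card +
        ((f (g t)) \ (Finset.range t).biUnion (fun s => f (g s))).card := by
      rw [Finset.range_add_one, Finset.biUnion_insert, ← Finset.card_sdiff_add_card, add_comm]
    rw [hc]
    generalize ((Finset.range t).biUnion (fun s => f (g s))).card = c at *
    generalize ((f (g t)) \ (Finset.range t).biUnion (fun s => f (g s))).card = d at *
    have hk' : (OPT : ℝ) ≤ c + B * d := by exact_mod_cast hk
    have hB1 : (1 : ℝ) ≤ B := by exact_mod_cast hB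
    have hB0 : (0 : ℝ) < B := by linarith
    have hr : (0 : ℝ) ≤ 1 - 1 / (B : ℝ) := by
      rw [sub_nonneg, div_le_one hB0]; exact hB1
    have hd : ((OPT : ℝ) - c) * (1 / B) ≤ d := by
      rw [mul_one_div, div_le_iff₀ hB0]; linarith
    have hm := mul_le_mul_of_nonneg_left ih hr
    push_cast
    rw [pow_succ]
    generalize 1 / (B : ℝ) = b at *
    generalize (1 - b) ^ t = q at *
    nlinarith
end

section
/- Let U be a finite set, let f : Fin n → Finset U be a family of finite sets, and for each j ∈ Fin n define the marginal profit m_j = |f(j) \ ⋃_{j'<j} f(j')| (the number of elements of f(j) not contained in any earlier set). Then for every subset S ⊆ Fin n, the sum of marginal profits over S is at most the coverage of S: Σ_{j∈S} m_j ≤ |⋃_{j∈S} f(j)|. -/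
theorem stmt_4 {U : Type*} [DecidableEq U] {n : ℕ} (f : Fin n → Finset U)
    (m : Fin n → ℕ)
    (hm : ∀ j : Fin n, m j = ((f j) \ (Finset.Iio j).biUnion f).card)
    (S : Finset (Fin n)) :
    ∑ j ∈ S, m j ≤ (S.biUnion f).card := by
  have key : ∀ i j : Fin n, i < j →
      Disjoint (f i \ (Finset.Iio i).biUnion f) (f j \ (Finset.Iio j).biUnion f) := by
    intro i j hij
    rw [Finset.disjoint_left]
    intro x hx hy
    rw [Finset.mem_sdiff] at hx hy
    exact hy.2 (Finset.mem_biUnion.2 ⟨i, Finset.mem_Iio.2 hij, hx.1⟩)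
  rw [Finset.sum_congr rfl (fun j _ => hm j), ← Finset.card_biUnion]
  · exact Finset.card_le_card (Finset.biUnion_mono fun j _ => Finset.sdiff_subset)
  · intro i _ j _ hij
    rcases lt_or_gt_of_ne hij with h | h
    · exact key i j h
    · exact (key j i h).symm
end

section
/- Let P (targets) and V (sensors) be nonempty finite sets and C ≥ 1 a real number. Suppose given: nonnegative reals x : V × V → ℝ; for each p ∈ P, nonnegative reals x^p : V × V → ℝ and y^p : V → ℝ; for each p ∈ P, subsets S_p ⊆ gp(p) ⊆ V. Assume: (a) x^p(u,v) ≤ x(u,v) for all p, u, v; (b) y^p(u) ≤ Σ_{w∈V} x^p(w,u) for all p and u; (c) Σ_{u∈S_p} y^p(u) ≥ 1/C² for every p ∈ P. Then there exists z : V → ℝ with 0 ≤ z(u) ≤ 1 for all u, Σ_{u ∈ gp(p)} z(u) ≥ 1 for every p ∈ P, and Σ_{u∈V} z(u) ≤ C² · Σ_{(u,v) ∈ V×V} x(u,v). -/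
theorem stmt_10 {P V : Type*} [Fintype P] [Fintype V] [Nonempty P] [Nonempty V]
    [DecidableEq V]
    (C : ℝ) (hC : 1 ≤ C)
    (x : V × V → ℝ) (hx : ∀ uv, 0 ≤ x uv)
    (xp : P → V × V → ℝ) (hxp : ∀ p uv, 0 ≤ xp p uv)
    (yp : P → V → ℝ) (hyp : ∀ p u, 0 ≤ yp p u)
    (gp : P → Finset V) (S : P → Finset V) (hSgp : ∀ p, S p ⊆ gp p)
    (ha : ∀ p uv, xp p uv ≤ x uv)
    (hb : ∀ p u, yp p u ≤ ∑ w : V, xp p (w, u))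
    (hc : ∀ p, 1 / C ^ 2 ≤ ∑ u ∈ S p, yp p u) :
    ∃ z : V → ℝ,
      (∀ u, 0 ≤ z u ∧ z u ≤ 1) ∧
      (∀ p, 1 ≤ ∑ u ∈ gp p, z u) ∧
      ∑ u : V, z u ≤ C ^ 2 * ∑ uv : V × V, x uv := by
  have hC2 : 0 < C ^ 2 := by positivity
  have hX : ∀ u, 0 ≤ C ^ 2 * ∑ w : V, x (w, u) := fun u =>
    mul_nonneg hC2.le (Finset.sum_nonneg fun w _ => hx _)
  have hz : ∀ u, 0 ≤ min 1 (C ^ 2 * ∑ w : V, x (w, u)) := fun u =>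
    le_min zero_le_one (hX u)
  refine ⟨fun u => min 1 (C ^ 2 * ∑ w : V, x (w, u)),
    fun u => ⟨hz u, min_le_left _ _⟩, fun p => ?_, ?_⟩
  · by_cases h : ∃ u ∈ gp p, 1 ≤ C ^ 2 * ∑ w : V, x (w, u)
    · obtain ⟨u, hu, h1⟩ := h
      calc (1 : ℝ) = min 1 (C ^ 2 * ∑ w : V, x (w, u)) := (min_eq_left h1).symm
        _ ≤ _ := Finset.single_le_sum
          (f := fun u => min 1 (C ^ 2 * ∑ w : V, x (w, u))) (fun i _ => hz i) hu
    · push Not at h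
      calc (1 : ℝ) = C ^ 2 * (1 / C ^ 2) := by field_simp
        _ ≤ C ^ 2 * ∑ u ∈ S p, yp p u := mul_le_mul_of_nonneg_left (hc p) hC2.le
        _ ≤ C ^ 2 * ∑ u ∈ gp p, yp p u := mul_le_mul_of_nonneg_left
            (Finset.sum_le_sum_of_subset_of_nonneg (hSgp p) fun u _ _ => hyp p u) hC2.le
        _ = ∑ u ∈ gp p, C ^ 2 * yp p u := Finset.mul_sum _ _ _
        _ ≤ _ := Finset.sum_le_sum fun u hu => by
          rw [min_eq_right (h u hu).le]
          exact mul_le_mul_of_nonneg_left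
            ((hb p u).trans (Finset.sum_le_sum fun w _ => ha p _)) hC2.le
  · calc _ ≤ ∑ u : V, C ^ 2 * ∑ w : V, x (w, u) :=
          Finset.sum_le_sum fun u _ => min_le_right _ _
      _ = _ := by rw [← Finset.mul_sum, Fintype.sum_prod_type_right]
end

section
/- Let T be a finite tree (a connected acyclic simple graph) on n ≥ 2 vertices. Then there exist vertex subsets S₁ and S₂ with S₁ ∪ S₂ = V(T) and |S₁ ∩ S₂| = 1, such that the subgraphs of T induced on S₁ and on S₂ are both connected, min(|S₁|, |S₂|) ≤ ⌈n/2⌉, and max(|S₁|, |S₂|) ≤ ⌈2n/3⌉. -/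
def JConn {V : Type*} [DecidableEq V] (T : SimpleGraph V) (S : Finset V) : Prop :=
  ∀ X Y : Finset V, X.Nonempty → Y.Nonempty → Disjoint X Y → X ∪ Y = S →
    ∃ a ∈ X, ∃ b ∈ Y, T.Adj a b

def JValid {V : Type*} [DecidableEq V] [Fintype V] (T : SimpleGraph V) (S R : Finset V) (v : V) :
    Prop :=
  S ∪ R = Finset.univ ∧ S ∩ R = {v} ∧ JConn T S ∧ JConn T R

theorem JConn.connected {V : Type*} [DecidableEq V] {T : SimpleGraph V} {S : Finset V}
    (h : JConn T S) {v : V} (hv : v ∈ S) : (T.induce (S : Set V)).Connected := by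
  classical
  have key : ∀ w (hw : w ∈ S), (T.induce (S : Set V)).Reachable ⟨v, hv⟩ ⟨w, hw⟩ := by
    by_contra! hc
    obtain ⟨w, hw, hr⟩ := hc
    let X := S.filter fun x => ∃ hx : x ∈ S, (T.induce (S : Set V)).Reachable ⟨v, hv⟩ ⟨x, hx⟩
    obtain ⟨a, ha, b, hb, hab⟩ := h X (S \ X)
      ⟨v, by simp only [X, Finset.mem_filter]; exact ⟨hv, hv, SimpleGraph.Reachable.refl _⟩⟩
      ⟨w, by
        simp only [X, Finset.mem_sdiff, Finset.mem_filter]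
        exact ⟨hw, fun ⟨_, _, h'⟩ => hr h'⟩⟩
      Finset.disjoint_sdiff (Finset.union_sdiff_of_subset (Finset.filter_subset _ _))
    simp only [X, Finset.mem_sdiff, Finset.mem_filter] at ha hb
    obtain ⟨_, haS, har⟩ := ha
    refine hb.2 ⟨hb.1, hb.1, har.trans ?_⟩
    apply SimpleGraph.Adj.reachable
    simpa using hab
  haveI : Nonempty (S : Set V) := ⟨⟨v, hv⟩⟩
  refine ⟨fun a b => ?_⟩
  exact (key a.1 a.2).symm.trans (key b.1 b.2)

theorem jconn_univ {V : Type*} [DecidableEq V] [Fintype V] {T : SimpleGraph V}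
    (h : T.Connected) : JConn T Finset.univ := by
  rintro X Y ⟨x, hx⟩ ⟨y, hy⟩ hd hu
  obtain ⟨p⟩ := h.preconnected x y
  obtain ⟨d, -, h1, h2⟩ := p.exists_boundary_dart (X : Set V) hx
    (by simpa using Finset.disjoint_right.mp hd hy)
  refine ⟨d.fst, h1, d.snd, ?_, d.adj⟩
  have : d.snd ∈ X ∪ Y := hu ▸ Finset.mem_univ _
  rcases Finset.mem_union.mp this with h' | h'
  · exact absurd h' h2
  · exact h'

theorem jconn_singleton {V : Type*} [DecidableEq V] (T : SimpleGraph V) (v : V) :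
    JConn T {v} := by
  rintro X Y ⟨x, hx⟩ ⟨y, hy⟩ hd hu
  have h1 : x ∈ ({v} : Finset V) := hu ▸ Finset.mem_union_left _ hx
  have h2 : y ∈ ({v} : Finset V) := hu ▸ Finset.mem_union_right _ hy
  simp only [Finset.mem_singleton] at h1 h2
  subst h1 h2
  exact absurd hy (Finset.disjoint_left.mp hd hx)

theorem JConn.cut {V : Type*} [DecidableEq V] {T : SimpleGraph V} {S : Finset V}
    (h : JConn T S) (Z : Finset V) {a b : V} (ha : a ∈ S) (haZ : a ∈ Z) (hb : b ∈ S) (hbZ : b ∉ Z) :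
    ∃ a ∈ S, ∃ b ∈ S, a ∈ Z ∧ b ∉ Z ∧ T.Adj a b := by
  obtain ⟨x, hx, y, hy, hxy⟩ := h (S ∩ Z) (S \ Z) ⟨a, by simp [*]⟩ ⟨b, by simp [*]⟩
    (by rw [Finset.disjoint_left]; grind) (by grind)
  exact ⟨x, by grind, y, by grind, by grind, by grind, hxy⟩

theorem JConn.of_cut {V : Type*} [DecidableEq V] {T : SimpleGraph V} {S : Finset V} (v : V)
    (h : ∀ Z : Finset V, v ∈ Z → ∀ b ∈ S, b ∉ Z → 
      ∃ a ∈ S, ∃ b ∈ S, a ∈ Z ∧ b ∉ Z ∧ T.Adj a b) (hv : v ∈ S) : JConn T S := by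
  rintro X Y ⟨x, hx⟩ ⟨y, hy⟩ hd hu
  rw [Finset.disjoint_left] at hd
  by_cases hvX : v ∈ X
  · obtain ⟨a, ha, b, hb, h1, h2, h3⟩ := h X hvX y (by grind) (by grind)
    exact ⟨a, h1, b, by grind, h3⟩
  · obtain ⟨a, ha, b, hb, h1, h2, h3⟩ := h Y (by grind) x (by grind) (by grind)
    exact ⟨b, by grind, a, h1, h3.symm⟩

theorem JConn.union {V : Type*} [DecidableEq V] {T : SimpleGraph V} {S R : Finset V} {v : V}
    (h : JConn T S) (h' : JConn T R) (hv : v ∈ S) (hv' : v ∈ R) : JConn T (S ∪ R) := by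
  refine JConn.of_cut v (fun Z hZ b hb hbZ => ?_) (by grind)
  rcases Finset.mem_union.mp hb with hb | hb
  · obtain ⟨a, ha, b, hb, h1⟩ := h.cut Z hv hZ hb hbZ
    exact ⟨a, by grind, b, by grind, h1⟩
  · obtain ⟨a, ha, b, hb, h1⟩ := h'.cut Z hv' hZ hb hbZ
    exact ⟨a, by grind, b, by grind, h1⟩

theorem JConn.insert {V : Type*} [DecidableEq V] {T : SimpleGraph V} {S : Finset V} {v u : V}
    (h : JConn T S) (hv : v ∈ S) (hu : T.Adj v u) : JConn T (insert u S) := by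
  refine JConn.of_cut v (fun Z hZ b hb hbZ => ?_) (by grind)
  rcases Finset.mem_insert.mp hb with rfl | hb
  · exact ⟨v, by grind, b, by grind, hZ, hbZ, hu⟩
  · obtain ⟨a, ha, b, hb, h1⟩ := h.cut Z hv hZ hb hbZ
    exact ⟨a, by grind, b, by grind, h1⟩

theorem JConn.part {V : Type*} [DecidableEq V] {T : SimpleGraph V} {S X Y : Finset V} {v : V}
    (h : JConn T S) (hv : v ∈ S) (hd : Disjoint X Y) (hu : X ∪ Y = S.erase v)
    (hn : ∀ a ∈ X, ∀ b ∈ Y, ¬ T.Adj a b) : JConn T (Insert.insert v X) := by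
  rw [Finset.disjoint_left] at hd
  have hS : ∀ x, x ∈ S ↔ x = v ∨ x ∈ X ∨ x ∈ Y := by
    intro x
    have := congrArg (x ∈ ·) hu
    simp only [Finset.mem_union, Finset.mem_erase, eq_iff_iff] at this
    by_cases hx : x = v
    · subst hx; simp [hv]
    · tauto
  refine JConn.of_cut v (fun Z hZ b hb hbZ => ?_) (by grind)
  obtain ⟨a, ha, c, hc, h1, h2, h3⟩ := h.cut (Z ∪ Y) hv (by grind) (b := b) (by grind) (by grind)
  have h4 : a ∉ Y := fun h => hn c (by grind) a h h3.symm
  exact ⟨a, by grind, c, by grind, by grind, by grind, h3⟩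

theorem jstep {V : Type*} [Fintype V] [DecidableEq V] (T : SimpleGraph V) (S R : Finset V) (v : V)
    (h : JValid T S R v) (hR : 2 * R.card < S.card + 1) (hR' : R.card + 1 < S.card) :
    ∃ S' R' v', JValid T S' R' v' ∧ max S'.card R'.card < S.card := by
  obtain ⟨h1, h2, h3, h4⟩ := h
  have hm : ∀ x, x ∈ S ∨ x ∈ R := by
    intro x
    have : x ∈ S ∪ R := h1 ▸ Finset.mem_univ x
    simpa using this
  have hi : ∀ x, x ∈ S → x ∈ R → x = v := by
    intro x ha hb
    have : x ∈ S ∩ R := Finset.mem_inter.mpr ⟨ha, hb⟩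
    simpa [h2] using this
  have hvv : v ∈ S ∩ R := by rw [h2]; simp
  have hvS : v ∈ S := by grind
  have hvR : v ∈ R := by grind
  by_cases hc : JConn T (S.erase v)
  · have : (S.erase v).Nonempty := by
      rw [← Finset.card_pos, Finset.card_erase_of_mem hvS]; omega
    obtain ⟨w, hw⟩ := this
    obtain ⟨a, ha, u, hu, ha1, hu1, hau⟩ := h3.cut {v} hvS (by simp) (b := w) (by grind) (by grind)
    have : a = v := by simpa using ha1
    subst this
    refine ⟨S.erase a, Insert.insert u R, u, ⟨?_, ?_, hc, h4.insert hvR hau⟩, ?_⟩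
    · ext x; grind
    · ext x; grind
    · rw [Finset.card_erase_of_mem hvS]
      have := Finset.card_insert_le u R
      omega
  · unfold JConn at hc
    push Not at hc
    obtain ⟨X, Y, hX, hY, hd, hu, hn⟩ := hc
    have key : ∀ X Y : Finset V, X.Nonempty → Disjoint X Y → X ∪ Y = S.erase v →
        (∀ a ∈ X, ∀ b ∈ Y, ¬ T.Adj a b) → X.card ≤ Y.card →
        ∃ S' R' v', JValid T S' R' v' ∧ max S'.card R'.card < S.card := by
      intro X Y hX hd hu hn hle
      have hA := h3.part hvS hd hu hn
      have hB := h3.part hvS hd.symm (by rw [Finset.union_comm]; exact hu)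
        (fun a ha b hb hab => hn b hb a ha hab.symm)
      have hcard := Finset.card_union_of_disjoint hd
      rw [hu, Finset.card_erase_of_mem hvS] at hcard
      have hXp := hX.card_pos
      rw [Finset.disjoint_left] at hd
      have hS : ∀ x, (x ∈ X ∨ x ∈ Y) ↔ (x ≠ v ∧ x ∈ S) := by
        intro x
        have := congrArg (x ∈ ·) hu
        simpa only [Finset.mem_union, Finset.mem_erase, eq_iff_iff] using this
      refine ⟨Insert.insert v Y, R ∪ X, v, ⟨?_, ?_, hB, ?_⟩, ?_⟩
      · ext x; grind
      · ext x; grind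
      · have := h4.union hA hvR (by simp)
        have e : R ∪ Insert.insert v X = R ∪ X := by ext x; grind
        rwa [e] at this
      · have a1 := Finset.card_insert_le v Y
        have a2 := Finset.card_union_le R X
        omega
    rcases le_total X.card Y.card with hle | hle
    · exact key X Y hX hd hu hn hle
    · exact key Y X hY hd.symm (by rw [Finset.union_comm]; exact hu)
        (fun a ha b hb hab => hn b hb a ha hab.symm) hle

theorem jmain {V : Type*} [Fintype V] [DecidableEq V] (T : SimpleGraph V) (m : ℕ) :
    ∀ (S R : Finset V) (v : V), JValid T S R v → max S.card R.card ≤ m →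
    ∃ S' R' v', JValid T S' R' v' ∧ 3 * max S'.card R'.card < 2 * Fintype.card V + 3 := by
  induction m using Nat.strong_induction_on with
  | _ m ih =>
    have key : ∀ (S R : Finset V) (v : V), JValid T S R v → R.card ≤ S.card → S.card ≤ m →
        ∃ S' R' v', JValid T S' R' v' ∧ 3 * max S'.card R'.card < 2 * Fintype.card V + 3 := by
      intro S R v h hle hm
      by_cases hk : 3 * S.card < 2 * Fintype.card V + 3
      · exact ⟨S, R, v, h, by rwa [max_eq_left hle]⟩
      have hc := Finset.card_union_add_card_inter S R
      rw [h.1, h.2.1, Finset.card_univ, Finset.card_singleton] at hc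
      have hRp : 0 < R.card := Finset.card_pos.mpr
        ⟨v, (Finset.mem_inter.mp (by rw [h.2.1]; simp : v ∈ S ∩ R)).2⟩
      obtain ⟨S', R', v', h', hlt⟩ := jstep T S R v h (by omega) (by omega)
      exact ih _ (lt_of_lt_of_le hlt hm) S' R' v' h' le_rfl
    intro S R v h hm
    rcases le_total R.card S.card with hle | hle
    · exact key S R v h hle (le_trans (le_max_left _ _) hm)
    · exact key R S v ⟨by rw [Finset.union_comm]; exact h.1, by rw [Finset.inter_comm]; exact h.2.1,
        h.2.2.2, h.2.2.1⟩ hle (le_trans (le_max_right _ _) hm)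

theorem stmt_12 {V : Type*} [Fintype V] [DecidableEq V] (T : SimpleGraph V)
    (hT : T.IsTree) (hn : 2 ≤ Fintype.card V) :
    ∃ S₁ S₂ : Finset V,
      S₁ ∪ S₂ = Finset.univ ∧
      (S₁ ∩ S₂).card = 1 ∧
      (T.induce (S₁ : Set V)).Connected ∧
      (T.induce (S₂ : Set V)).Connected ∧
      min S₁.card S₂.card ≤ ⌈(Fintype.card V : ℚ) / 2⌉₊ ∧
      max S₁.card S₂.card ≤ ⌈2 * (Fintype.card V : ℚ) / 3⌉₊ := by
  obtain ⟨v⟩ := hT.connected.nonempty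
  obtain ⟨S, R, w, h, hlt⟩ := jmain T _ Finset.univ {v} v
    ⟨by simp, by simp, jconn_univ hT.connected, jconn_singleton T v⟩ le_rfl
  have hw : w ∈ S ∩ R := by rw [h.2.1]; simp
  rw [Finset.mem_inter] at hw
  have hc := Finset.card_union_add_card_inter S R
  rw [h.1, h.2.1, Finset.card_univ, Finset.card_singleton] at hc
  refine ⟨S, R, h.1, by rw [h.2.1]; simp, h.2.2.1.connected hw.1, h.2.2.2.connected hw.2, ?_, ?_⟩
  · have h2 : 2 * min S.card R.card ≤ Fintype.card V + 1 := by omega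
    generalize min S.card R.card = a at *
    rcases a with _ | a
    · simp
    · rw [Nat.succ_le_iff, Nat.lt_ceil]
      have : 2 * a < Fintype.card V := by omega
      have : (2 * a : ℚ) < Fintype.card V := by exact_mod_cast this
      linarith
  · generalize max S.card R.card = a at *
    rcases a with _ | a
    · simp
    · rw [Nat.succ_le_iff, Nat.lt_ceil]
      have : 3 * a < 2 * Fintype.card V := by omega
      have : (3 * a : ℚ) < 2 * Fintype.card V := by exact_mod_cast this
      linarith
end

section
/- There exists a natural number B₀ such that the following holds for every B ≥ B₀: let T be a finite tree (connected acyclic simple graph) with at most 4B vertices, let U be a finite set (of targets), and let f : V(T) → Finset U assign to each vertex the set of targets it covers. Then there exists a subset S ⊆ V(T) with |S| ≤ B such that S induces a connected subgraph of T and |⋃_{v∈S} f v| ≥ (1/8) · |⋃_{v∈V(T)} f v|. -/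
theorem aux_walk {V : Type} (T : SimpleGraph V) (l : List V) :
    ∀ a, (a :: l).IsChain T.Adj → ∃ (v : V) (p : T.Walk a v), p.support = a :: l := by
  induction l with
  | nil => intro a _; exact ⟨a, .nil, rfl⟩
  | cons b l ih =>
    intro a h
    rw [List.isChain_cons_cons] at h
    obtain ⟨v, p, hp⟩ := ih b h.2
    exact ⟨v, .cons h.1 p, by simp [hp]⟩

theorem aux_conn {V : Type} [DecidableEq V] (T : SimpleGraph V) (l : List V) (hl : l ≠ [])
    (h : l.IsChain T.Adj) : (T.induce ((l.toFinset : Finset V) : Set V)).Connected := by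
  cases l with
  | nil => exact absurd rfl hl
  | cons a l =>
    obtain ⟨v, p, hp⟩ := aux_walk T l a h
    have := p.connected_induce_support
    rw [hp] at this
    rw [List.coe_toFinset]
    exact this

theorem aux_tour {V : Type} [Fintype V] [DecidableEq V] (T : SimpleGraph V) (hT : T.Connected)
    (k : ℕ) (hk : k + 1 ≤ Fintype.card V) :
    ∃ l : List V, l.IsChain T.Adj ∧ l.length = 2 * k + 1 ∧ l.toFinset.card = k + 1 := by
  induction k with
  | zero =>
    obtain ⟨u⟩ := hT.nonempty
    exact ⟨[u], by simp, by simp, by simp⟩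
  | succ k ih =>
    obtain ⟨l, hc, hlen, hcard⟩ := ih (by omega)
    obtain ⟨x, hx⟩ : l.toFinset.Nonempty := by
      rw [← Finset.card_pos]; omega
    obtain ⟨y, hy⟩ : ∃ y, y ∉ l.toFinset := by
      by_contra! hcon
      have := Finset.card_eq_iff_eq_univ l.toFinset |>.2 (Finset.eq_univ_iff_forall.2 hcon)
      omega
    obtain ⟨p⟩ := hT.preconnected x y
    obtain ⟨d, -, h1, h2⟩ := p.exists_boundary_dart (l.toFinset : Set V) hx hy
    obtain ⟨⟨u, v⟩, hadj⟩ := d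
    simp only [Finset.mem_coe, List.mem_toFinset] at h1 h2 hadj
    obtain ⟨l₁, l₂, rfl⟩ := List.append_of_mem h1
    refine ⟨l₁ ++ u :: v :: u :: l₂, ?_, ?_, ?_⟩
    · rw [List.isChain_split] at hc
      rw [List.isChain_split, List.isChain_cons_cons, List.isChain_cons_cons]
      exact ⟨hc.1, hadj, hadj.symm, hc.2⟩
    · simp at hlen ⊢; omega
    · have : (l₁ ++ u :: v :: u :: l₂).toFinset = insert v (l₁ ++ u :: l₂).toFinset := by
        ext z; simp
      rw [this, Finset.card_insert_of_notMem (fun h => h2 (List.mem_toFinset.1 h)), hcard]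

theorem aux_split {V U : Type} [DecidableEq V] [DecidableEq U] (T : SimpleGraph V)
    (f : V → Finset U) (B : ℕ) (m : ℕ) :
    ∀ l : List V, l ≠ [] → l.IsChain T.Adj → l.length ≤ m * B →
    ∃ S : Finset V, S.card ≤ B ∧ (T.induce (S : Set V)).Connected ∧
      (l.toFinset.biUnion f).card ≤ m * (S.biUnion f).card := by
  induction m with
  | zero =>
    intro l hl _ h
    simp at h; exact absurd h hl
  | succ m ih =>
    intro l hl hc hlen
    have hB : B ≠ 0 := by
      rintro rfl
      simp at hlen; exact hl hlen
    have hcard : (l.take B).toFinset.card ≤ B :=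
      (List.toFinset_card_le _).trans (by simp)
    have hconn := aux_conn T (l.take B) (by simp [hB, hl]) (hc.take B)
    by_cases hd : l.drop B = []
    · refine ⟨(l.take B).toFinset, hcard, hconn, ?_⟩
      have : l.take B = l := by
        have := List.take_append_drop B l
        rwa [hd, List.append_nil] at this
      rw [this]
      exact Nat.le_mul_of_pos_left _ (by omega)
    · obtain ⟨S, h1, h2, h3⟩ := ih (l.drop B) hd (hc.drop B) (by
        rw [List.length_drop]; rw [Nat.succ_mul] at hlen; omega)
      have hle : (l.toFinset.biUnion f).card ≤
          ((l.take B).toFinset.biUnion f).card + ((l.drop B).toFinset.biUnion f).card := by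
        conv_lhs => rw [← List.take_append_drop B l, List.toFinset_append, Finset.union_biUnion]
        exact Finset.card_union_le _ _
      by_cases hcmp : ((l.take B).toFinset.biUnion f).card ≤ (S.biUnion f).card
      · exact ⟨S, h1, h2, by rw [Nat.succ_mul]; omega⟩
      · refine ⟨_, hcard, hconn, ?_⟩
        have := Nat.mul_le_mul_left m (le_of_not_ge hcmp)
        rw [Nat.succ_mul]; omega

theorem stmt_14 :
    ∃ B₀ : ℕ, ∀ B : ℕ, B₀ ≤ B →
      ∀ (V U : Type) [Fintype V] [DecidableEq V] [DecidableEq U]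
        (T : SimpleGraph V) (f : V → Finset U),
        T.IsTree → Fintype.card V ≤ 4 * B →
        ∃ S : Finset V, S.card ≤ B ∧ (T.induce (S : Set V)).Connected ∧
          ((S.biUnion f).card : ℝ) ≥
            (1 / 8 : ℝ) * (((Finset.univ : Finset V).biUnion f).card : ℝ) := by
  refine ⟨0, fun B _ V U _ _ _ T f hT hV => ?_⟩
  have hne := hT.connected.nonempty
  have hpos : 0 < Fintype.card V := Fintype.card_pos
  obtain ⟨l, hc, hlen, hcard⟩ := aux_tour T hT.connected (Fintype.card V - 1) (by omega)
  have huniv : l.toFinset = Finset.univ := by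
    rw [← Finset.card_eq_iff_eq_univ]; omega
  obtain ⟨S, h1, h2, h3⟩ := aux_split T f B 8 l (by rintro rfl; simp at hlen) hc (by omega)
  refine ⟨S, h1, h2, ?_⟩
  rw [huniv] at h3
  have : (((Finset.univ : Finset V).biUnion f).card : ℝ) ≤ 8 * ((S.biUnion f).card : ℝ) := by
    exact_mod_cast h3
  linarith
end
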